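/- Let g ∈ C¹(ℝ) with G(y) = ∫₀^y g(t) dt, and suppose lim_{y→+∞} y·g(y)/G(y) = α and lim_{y→−∞} y·g(y)/G(y) = α, where G(y) > 0 for |y| large. Then for every β > α there exists C > 0 such that |g(y)| ≤ C(|y|^{β−1} + 1) for all y ∈ ℝ. -/

import Mathlib

open Filter Topology

/-!
Writing `q y = y * g y / G y`, an upper bound `q ≤ β` near `+∞` says that `G ^ 2 * y ^ (-2 * β)` is
nonincreasing there; using `G ^ 2` makes the sign of `G` irrelevant. Hence `G = O(y ^ β)`, and
`g = q * (G / y)` is `O(y ^ (β - 1))` once `q` is bounded. The reflection `y ↦ -y` preserves `q` and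
transfers the estimate to `-∞`; on the remaining compact set `g` is bounded by continuity.
-/

open Asymptotics Set

theorem antitoneOn_mul_rpow_neg {f f' : ℝ → ℝ} {γ : ℝ} {s : Set ℝ} (hs : Convex ℝ s)
    (hs_pos : s ⊆ Ioi 0) (hf : ∀ y ∈ s, HasDerivAt f (f' y) y)
    (hle : ∀ y ∈ s, y * f' y ≤ γ * f y) :
    AntitoneOn (fun y ↦ f y * y ^ (-γ)) s := by
  have hderiv : ∀ y ∈ s, HasDerivAt (fun y ↦ f y * y ^ (-γ))
      (f' y * y ^ (-γ) + f y * (-γ * y ^ (-γ - 1))) y := fun y hy ↦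
    (hf y hy).mul (Real.hasDerivAt_rpow_const (Or.inl (hs_pos hy).ne'))
  refine antitoneOn_of_hasDerivWithinAt_nonpos hs
    (fun y hy ↦ (hderiv y hy).continuousAt.continuousWithinAt)
    (fun y hy ↦ (hderiv y (interior_subset hy)).hasDerivWithinAt) fun y hy ↦ ?_
  have hys : y ∈ s := interior_subset hy
  have hy_pos : 0 < y := hs_pos hys
  calc f' y * y ^ (-γ) + f y * (-γ * y ^ (-γ - 1))
      = (y * f' y - γ * f y) * y ^ (-γ - 1) := by
        rw [Real.rpow_sub_one hy_pos.ne']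
        field_simp
        ring
    _ ≤ 0 := mul_nonpos_of_nonpos_of_nonneg (sub_nonpos.2 (hle y hys)) (by positivity)

theorem isBigO_rpow_of_mul_deriv_mul_self_le {f f' : ℝ → ℝ} {β : ℝ}
    (hf : ∀ᶠ y in atTop, HasDerivAt f (f' y) y)
    (hle : ∀ᶠ y in atTop, y * f' y * f y ≤ β * f y ^ 2) :
    f =O[atTop] fun y ↦ y ^ β := by
  obtain ⟨a, ha⟩ := eventually_atTop.1 ((eventually_gt_atTop 0).and (hf.and hle))
  have hanti : AntitoneOn (fun y ↦ f y ^ 2 * y ^ (-(2 * β))) (Ici a) :=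
    antitoneOn_mul_rpow_neg (f' := fun y ↦ 2 * f y * f' y) (convex_Ici a)
      (fun y hy ↦ (ha y hy).1)
      (fun y hy ↦ by simpa using (ha y hy).2.1.fun_pow 2)
      (fun y hy ↦ by linarith [(ha y hy).2.2])
  have hsq : (fun y ↦ f y ^ 2) =O[atTop] fun y ↦ (y ^ β) ^ 2 := by
    refine .of_bound (f a ^ 2 * a ^ (-(2 * β))) ?_
    filter_upwards [eventually_ge_atTop a] with y hy
    have hy_pos : 0 < y := (ha y hy).1
    have hpow : y ^ (2 * β) = (y ^ β) ^ 2 := by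
      rw [mul_comm, Real.rpow_mul hy_pos.le, Real.rpow_two]
    have hy_le : f y ^ 2 * y ^ (-(2 * β)) ≤ f a ^ 2 * a ^ (-(2 * β)) :=
      hanti self_mem_Ici hy hy
    rw [Real.rpow_neg hy_pos.le, ← div_eq_mul_inv, div_le_iff₀ (by positivity), hpow] at hy_le
    simpa only [norm_pow, Real.norm_eq_abs, sq_abs] using hy_le
  exact hsq.of_pow two_ne_zero

theorem isBigO_rpow_sub_one_atTop_of_hasDerivAt {f f' : ℝ → ℝ} {β : ℝ}
    (hf : ∀ᶠ y in atTop, HasDerivAt f (f' y) y) (hne : ∀ᶠ y in atTop, f y ≠ 0)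
    (hle : ∀ᶠ y in atTop, y * f' y / f y ≤ β)
    (hbdd : (fun y ↦ y * f' y / f y) =O[atTop] fun _ ↦ (1 : ℝ)) :
    f' =O[atTop] fun y ↦ y ^ (β - 1) := by
  have hf_growth : f =O[atTop] fun y ↦ y ^ β := by
    refine isBigO_rpow_of_mul_deriv_mul_self_le hf ?_
    filter_upwards [hne, hle] with y hy_ne hy_le
    calc y * f' y * f y = y * f' y / f y * f y ^ 2 := by field_simp
      _ ≤ β * f y ^ 2 := by gcongr
  refine (hbdd.mul (hf_growth.mul (isBigO_refl (fun y ↦ y⁻¹) atTop))).congr' ?_ ?_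
  · filter_upwards [hne, eventually_ne_atTop 0] with y hy_ne hy0
    field_simp
  · filter_upwards [eventually_ne_atTop 0] with y hy0
    rw [one_mul, Real.rpow_sub_one hy0, div_eq_mul_inv]

theorem isBigO_rpow_sub_one_atBot_of_hasDerivAt {f f' : ℝ → ℝ} {β : ℝ}
    (hf : ∀ᶠ y in atBot, HasDerivAt f (f' y) y) (hne : ∀ᶠ y in atBot, f y ≠ 0)
    (hle : ∀ᶠ y in atBot, y * f' y / f y ≤ β)
    (hbdd : (fun y ↦ y * f' y / f y) =O[atBot] fun _ ↦ (1 : ℝ)) :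
    f' =O[atBot] fun y ↦ (-y) ^ (β - 1) := by
  have hneg : Tendsto (fun y : ℝ ↦ -y) atTop atBot := tendsto_neg_atTop_atBot
  have hreflect : (fun y ↦ -f' (-y)) =O[atTop] fun y ↦ y ^ (β - 1) := by
    refine isBigO_rpow_sub_one_atTop_of_hasDerivAt (f := fun y ↦ f (-y)) ?_
      (hneg.eventually hne) ?_ ?_
    · filter_upwards [hneg.eventually hf] with y hy
      simpa [Function.comp_def] using hy.scomp y (hasDerivAt_neg y)
    · simpa using hneg.eventually hle
    · simpa [Function.comp_def] using hbdd.comp_tendsto hneg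
  simpa [Function.comp_def] using hreflect.comp_tendsto tendsto_neg_atBot_atTop

theorem isBigO_rpow_sub_one_cocompact_of_hasDerivAt {f f' : ℝ → ℝ} {β : ℝ}
    (hf : ∀ᶠ y in cocompact ℝ, HasDerivAt f (f' y) y) (hne : ∀ᶠ y in cocompact ℝ, f y ≠ 0)
    (hle : ∀ᶠ y in cocompact ℝ, y * f' y / f y ≤ β)
    (hbdd : (fun y ↦ y * f' y / f y) =O[cocompact ℝ] fun _ ↦ (1 : ℝ)) :
    f' =O[cocompact ℝ] fun y ↦ |y| ^ (β - 1) := by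
  simp only [cocompact_eq_atBot_atTop, eventually_sup, isBigO_sup] at hf hne hle hbdd ⊢
  constructor
  · refine (isBigO_rpow_sub_one_atBot_of_hasDerivAt hf.1 hne.1 hle.1 hbdd.1).congr' .rfl ?_
    filter_upwards [eventually_le_atBot 0] with y hy
    rw [abs_of_nonpos hy]
  · refine (isBigO_rpow_sub_one_atTop_of_hasDerivAt hf.2 hne.2 hle.2 hbdd.2).congr' .rfl ?_
    filter_upwards [eventually_ge_atTop 0] with y hy
    rw [abs_of_nonneg hy]

theorem exists_forall_norm_le_mul_norm_add_one {X E F : Type*} [TopologicalSpace X]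
    [SeminormedAddCommGroup E] [SeminormedAddCommGroup F] {u : X → E} {v : X → F}
    (hu : Continuous u) (huv : u =O[cocompact X] v) :
    ∃ C > 0, ∀ x, ‖u x‖ ≤ C * (‖v x‖ + 1) := by
  obtain ⟨A, hA, hO⟩ := huv.exists_pos
  obtain ⟨K, hK, hfar⟩ := mem_cocompact.1 hO.bound
  obtain ⟨B, hB⟩ := hK.exists_bound_of_continuousOn hu.continuousOn
  refine ⟨max A B, lt_max_of_lt_left hA, fun x ↦ ?_⟩
  by_cases hx : x ∈ K
  · calc ‖u x‖ ≤ B := hB x hx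
      _ ≤ max A B := le_max_right A B
      _ ≤ max A B * (‖v x‖ + 1) := le_mul_of_one_le_right (by positivity) (by simp)
  · calc ‖u x‖ ≤ A * ‖v x‖ := hfar hx
      _ ≤ max A B * (‖v x‖ + 1) := by gcongr <;> simp

theorem growth_explicit_general {g G : ℝ → ℝ} {β : ℝ} (hg : Continuous g)
    (hG : ∀ y, HasDerivAt G (g y) y) (hne : ∀ᶠ y in cocompact ℝ, G y ≠ 0)
    (hle : ∀ᶠ y in cocompact ℝ, y * g y / G y ≤ β)
    (hbdd : (fun y ↦ y * g y / G y) =O[cocompact ℝ] fun _ ↦ (1 : ℝ)) :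
    ∃ C > 0, ∀ y : ℝ, |g y| ≤ C * (|y| ^ (β - 1) + 1) := by
  have hgrowth := isBigO_rpow_sub_one_cocompact_of_hasDerivAt (.of_forall hG) hne hle hbdd
  simpa [abs_of_nonneg, Real.rpow_nonneg] using
    exists_forall_norm_le_mul_norm_add_one hg hgrowth

/-- Explicit growth estimate (growth-explicit): if `g ∈ C¹`, `G(y) = ∫₀^y g`,
`G > 0` for large `|y|`, and `y·g(y)/G(y) → α` as `y → ±∞`, then for every `β > α`
there is `C > 0` with `|g(y)| ≤ C(|y|^{β−1} + 1)` for all `y`. -/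
theorem growth_explicit (g : ℝ → ℝ) (hg : ContDiff ℝ 1 g) (G : ℝ → ℝ)
    (hG : ∀ y : ℝ, G y = ∫ t in (0 : ℝ)..y, g t)
    (α : ℝ)
    (hpos : ∃ R > (0 : ℝ), ∀ y : ℝ, R ≤ |y| → 0 < G y)
    (htop : Tendsto (fun y : ℝ => y * g y / G y) atTop (𝓝 α))
    (hbot : Tendsto (fun y : ℝ => y * g y / G y) atBot (𝓝 α)) :
    ∀ β : ℝ, α < β → ∃ C > 0, ∀ y : ℝ, |g y| ≤ C * (|y| ^ (β - 1) + 1) := by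
  intro β hβ
  obtain ⟨R, -, hR⟩ := hpos
  have hderiv (y : ℝ) : HasDerivAt G (g y) y :=
    funext hG ▸ (hg.continuous.integral_hasStrictDerivAt 0 y).hasDerivAt
  have hne : ∀ᶠ y in cocompact ℝ, G y ≠ 0 :=
    (tendsto_norm_cocompact_atTop.eventually_ge_atTop R).mono fun y hy ↦ (hR y hy).ne'
  have hlim : Tendsto (fun y ↦ y * g y / G y) (cocompact ℝ) (𝓝 α) :=
    cocompact_eq_atBot_atTop (α := ℝ) ▸ hbot.sup htop
  exact growth_explicit_general hg.continuous hderiv hne (hlim.eventually_le_const hβ)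
    (hlim.isBigO_one ℝ)
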